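/- arXiv:1610.06760 — 3 statements merged into one kernel-verified Lean document; each statement's English description precedes it below -/
import Mathlib

section
/- Fix a real number β < 1, and let f(z) = z + Σ_{n≥2} a_n zⁿ be analytic on the open unit disc 𝔻 with Re(f(z)/z) > β for all z ∈ 𝔻 \ {0}. Then for every real λ and all integers n, m ≥ 2: |λ a_n a_m − a_{n+m−1}| ≤ 2(1−β) whenever 0 ≤ λ ≤ 1/(1−β), and |λ a_n a_m − a_{n+m−1}| ≤ 2(1−β)·|2λ(1−β) − 1| whenever λ < 0 or λ > 1/(1−β). -/
/-!
If `p(z) = 1 + ∑ cₖ zᵏ` has nonnegative real part on the disc, then for `r < 1` the density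
`Re p(r e^{iθ})` defines a probability measure on the circle under which `cₖ rᵏ` is twice the mean
of `e^{-ikθ}`. With `X = e^{-isθ}` and `Y = e^{-itθ}` the Zalcman functional of `p` therefore
becomes `-2 (E[XY] - 2κ E[X] E[Y])`. In `L²` this is `-2 ⟪conj X, (1 - 2κP) Y⟫`, where `P` is the
orthogonal projection onto the constants, and `1 - 2κP` has norm at most `max 1 |1 - 2κ|`, the two
regimes of the theorem. Apply this to `p(z) = (f(z)/z - β)/(1 - β)` and `κ = λ(1 - β)`, letting
`r → 1`.
-/

open MeasureTheory AddCircle ComplexConjugate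
open scoped InnerProductSpace

section InnerProductSpace

variable {𝕜 E : Type*} [RCLike 𝕜] [NormedAddCommGroup E] [InnerProductSpace 𝕜 E]

lemma norm_sub_smul_starProjection_le (K : Submodule 𝕜 E) [K.HasOrthogonalProjection] (κ : 𝕜)
    (y : E) : ‖y - κ • K.starProjection y‖ ≤ max 1 ‖1 - κ‖ * ‖y‖ := by
  set M := max 1 ‖1 - κ‖
  have along : K.starProjection (y - κ • K.starProjection y) = (1 - κ) • K.starProjection y := by
    rw [map_sub, map_smul, K.starProjection_eq_self_iff.2 (K.starProjection_apply_mem y),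
      sub_smul, one_smul]
  have across : Kᗮ.starProjection (y - κ • K.starProjection y) = Kᗮ.starProjection y := by
    have annihilates : Kᗮ.starProjection (K.starProjection y) = 0 :=
      (Submodule.starProjection_apply_eq_zero_iff _).2
        (K.le_orthogonal_orthogonal (K.starProjection_apply_mem y))
    rw [map_sub, map_smul, annihilates, smul_zero, sub_zero]
  refine le_of_sq_le_sq ?_ (by positivity)
  calc ‖y - κ • K.starProjection y‖ ^ 2
      = ‖1 - κ‖ ^ 2 * ‖K.starProjection y‖ ^ 2 + 1 ^ 2 * ‖Kᗮ.starProjection y‖ ^ 2 := by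
        rw [K.norm_sq_eq_add_norm_sq_starProjection, along, across, norm_smul, mul_pow, one_pow,
          one_mul]
    _ ≤ M ^ 2 * ‖K.starProjection y‖ ^ 2 + M ^ 2 * ‖Kᗮ.starProjection y‖ ^ 2 := by
        gcongr
        exacts [le_max_right _ _, le_max_left _ _]
    _ = (M * ‖y‖) ^ 2 := by
        rw [mul_pow, K.norm_sq_eq_add_norm_sq_starProjection y, mul_add]

lemma norm_inner_sub_mul_inner_mul_inner_le {e : E} (he : ‖e‖ = 1) (κ : 𝕜) (x y : E) :
    ‖⟪x, y⟫_𝕜 - κ * ⟪x, e⟫_𝕜 * ⟪e, y⟫_𝕜‖ ≤ max 1 ‖1 - κ‖ * ‖x‖ * ‖y‖ := by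
  have inner_eq : ⟪x, y⟫_𝕜 - κ * ⟪x, e⟫_𝕜 * ⟪e, y⟫_𝕜
      = ⟪x, y - κ • (𝕜 ∙ e).starProjection y⟫_𝕜 := by
    rw [Submodule.starProjection_unit_singleton 𝕜 he, inner_sub_right, inner_smul_right,
      inner_smul_right]
    ring
  calc ‖⟪x, y⟫_𝕜 - κ * ⟪x, e⟫_𝕜 * ⟪e, y⟫_𝕜‖
      ≤ ‖x‖ * ‖y - κ • (𝕜 ∙ e).starProjection y‖ := inner_eq ▸ norm_inner_le_norm _ _
    _ ≤ ‖x‖ * (max 1 ‖1 - κ‖ * ‖y‖) := by gcongr; exact norm_sub_smul_starProjection_le _ _ _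
    _ = max 1 ‖1 - κ‖ * ‖x‖ * ‖y‖ := by ring

end InnerProductSpace

section Measure

variable {Ω : Type*} [MeasurableSpace Ω] {μ : Measure Ω}

lemma isProbabilityMeasure_withDensity_ofReal {W : Ω → ℝ} (hW : Integrable W μ)
    (hW0 : ∀ x, 0 ≤ W x) (hW1 : ∫ x, W x ∂μ = 1) :
    IsProbabilityMeasure (μ.withDensity fun x => ENNReal.ofReal (W x)) := by
  constructor
  rw [withDensity_apply _ .univ, setLIntegral_univ,
    ← ofReal_integral_eq_lintegral_ofReal hW (.of_forall hW0), hW1, ENNReal.ofReal_one]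

lemma toReal_eLpNorm_le_one_of_norm_le_one [IsProbabilityMeasure μ] {E : Type*}
    [NormedAddCommGroup E] {X : Ω → E} (hX : ∀ ω, ‖X ω‖ ≤ 1) (q : ENNReal) :
    (eLpNorm X q μ).toReal ≤ 1 := by
  refine ENNReal.toReal_le_of_le_ofReal zero_le_one
    ((eLpNorm_le_of_ae_bound (.of_forall hX)).trans_eq ?_)
  rw [measure_univ, ENNReal.one_rpow, one_mul]

lemma norm_integral_mul_sub_mul_integral_mul_integral_le [IsProbabilityMeasure μ] {𝕜 : Type*}
    [RCLike 𝕜] {X Y : Ω → 𝕜}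
    (hX : MemLp X 2 μ) (hY : MemLp Y 2 μ) (κ : 𝕜) :
    ‖∫ ω, X ω * Y ω ∂μ - κ * (∫ ω, X ω ∂μ) * ∫ ω, Y ω ∂μ‖
      ≤ max 1 ‖1 - κ‖ * (eLpNorm X 2 μ).toReal * (eLpNorm Y 2 μ).toReal := by
  have h1 : MemLp (fun _ : Ω => (1 : 𝕜)) 2 μ := memLp_const 1
  have norm_one : ‖h1.toLp‖ = 1 := by
    rw [Lp.norm_toLp, eLpNorm_const _ two_ne_zero (IsProbabilityMeasure.ne_zero μ)]
    simp
  have inner_toLp {U V : Ω → 𝕜} (hU : MemLp U 2 μ) (hV : MemLp V 2 μ) :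
      ⟪hU.toLp, hV.toLp⟫_𝕜 = ∫ ω, star (U ω) * V ω ∂μ := by
    rw [L2.inner_def]
    refine integral_congr_ae ?_
    filter_upwards [hU.coeFn_toLp, hV.coeFn_toLp] with ω hUω hVω
    rw [hUω, hVω, RCLike.inner_apply', starRingEnd_apply]
  have h := norm_inner_sub_mul_inner_mul_inner_le norm_one κ hX.star.toLp hY.toLp
  simpa only [inner_toLp, Pi.star_apply, star_star, star_one, one_mul, mul_one, Lp.norm_toLp,
    eLpNorm_star] using h

end Measure

section Fourier

variable {T : ℝ} [Fact (0 < T)]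

lemma fourierCoeff_conj (f : AddCircle T → ℂ) (n : ℤ) :
    fourierCoeff (fun x => conj (f x)) n = conj (fourierCoeff f (-n)) := by
  simp only [fourierCoeff, ← integral_conj, smul_eq_mul, map_mul, ← fourier_neg, neg_neg]

lemma fourierCoeff_ofReal_re {f : AddCircle T → ℂ} (hf : Integrable f haarAddCircle) (n : ℤ) :
    fourierCoeff (fun x => ((f x).re : ℂ)) n
      = (fourierCoeff f n + conj (fourierCoeff f (-n))) / 2 := by
  have hconj : Integrable (fun x => conj (f x)) haarAddCircle :=
    (Complex.conjCLE : ℂ →L[ℝ] ℂ).integrable_comp hf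
  have re_eq : (fun x => ((f x).re : ℂ)) = (2⁻¹ : ℂ) • (f + fun x => conj (f x)) := by
    ext x
    simp [Complex.re_eq_add_conj, div_eq_inv_mul]
  rw [re_eq, fourierCoeff.const_smul, fourierCoeff.add hf hconj, Pi.add_apply, fourierCoeff_conj,
    smul_eq_mul, div_eq_inv_mul]

lemma hasSum_fourierCoeff {ι : Type*} {g : ι → C(AddCircle T, ℂ)} {F : C(AddCircle T, ℂ)}
    (hF : HasSum g F) (n : ℤ) :
    HasSum (fun i => fourierCoeff (g i) n) (fourierCoeff F n) := by
  simpa only [ContinuousLinearMap.comp_apply, innerSL_apply_apply,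
    ← HilbertBasis.repr_apply_apply, fourierBasis_repr, fourierCoeff_toLp] using
    hF.mapL ((innerSL ℂ (fourierBasis (T := T) n)).comp (ContinuousMap.toLp 2 haarAddCircle ℂ))

lemma hasSum_fourierCoeff_nat {b : ℕ → ℂ} {F : C(AddCircle T, ℂ)}
    (hF : HasSum (fun k : ℕ => b k • fourier (k : ℤ)) F) (n : ℤ) :
    HasSum (fun k : ℕ => if n = k then b k else 0) (fourierCoeff F n) := by
  convert hasSum_fourierCoeff hF n using 2 with k
  rw [ContinuousMap.coe_smul, fourierCoeff.const_smul, fourierCoeff_fourier, Pi.single_apply,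
    smul_ite, smul_zero, smul_eq_mul, mul_one]

lemma fourierCoeff_natCast_of_hasSum {b : ℕ → ℂ} {F : C(AddCircle T, ℂ)}
    (hF : HasSum (fun k : ℕ => b k • fourier (k : ℤ)) F) (n : ℕ) : fourierCoeff F n = b n := by
  refine (hasSum_fourierCoeff_nat hF n).unique ?_
  simpa only [Nat.cast_inj, if_true] using
    hasSum_single (f := fun k : ℕ => if n = k then b k else 0) n fun k hk => if_neg hk.symm

lemma fourierCoeff_neg_natCast_of_hasSum {b : ℕ → ℂ} {F : C(AddCircle T, ℂ)}
    (hF : HasSum (fun k : ℕ => b k • fourier (k : ℤ)) F) {n : ℕ} (hn : n ≠ 0) :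
    fourierCoeff F (-n) = 0 := by
  refine (hasSum_fourierCoeff_nat hF _).unique ?_
  convert hasSum_zero using 2 with k
  exact if_neg (by omega)

lemma integral_fourier_neg_withDensity_ofReal {W : AddCircle T → ℝ} (hW : Measurable W)
    (hW0 : ∀ x, 0 ≤ W x) (n : ℤ) :
    ∫ x, fourier (-n) x ∂(haarAddCircle.withDensity fun x => ENNReal.ofReal (W x))
      = fourierCoeff (fun x => (W x : ℂ)) n := by
  rw [integral_withDensity_eq_integral_toReal_smul hW.ennreal_ofReal
    (.of_forall fun _ => ENNReal.ofReal_lt_top), fourierCoeff]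
  congr with x
  rw [ENNReal.toReal_ofReal (hW0 x), Complex.real_smul, smul_eq_mul, mul_comm]

lemma exists_isProbabilityMeasure_integral_fourier_neg_eq {b : ℕ → ℂ} {F : C(AddCircle T, ℂ)}
    (hF : HasSum (fun k : ℕ => b k • fourier (k : ℤ)) F) (hb0 : (b 0).re = 1)
    (hre : ∀ x, 0 ≤ (F x).re) :
    ∃ μ : Measure (AddCircle T), IsProbabilityMeasure μ ∧
      ∀ k : ℕ, k ≠ 0 → ∫ x, fourier (-k : ℤ) x ∂μ = b k / 2 := by
  have hFint : Integrable F haarAddCircle := F.continuous.integrable_of_hasCompactSupport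
    (HasCompactSupport.of_compactSpace F)
  have mass : ∫ x, (F x).re ∂haarAddCircle = 1 := by
    have coeff_zero : fourierCoeff F 0 = ∫ x, F x ∂haarAddCircle := by
      simp only [fourierCoeff, neg_zero, fourier_zero, one_smul]
    rw [← hb0, ← fourierCoeff_natCast_of_hasSum hF 0, Nat.cast_zero, coeff_zero]
    exact integral_re hFint
  refine ⟨haarAddCircle.withDensity fun x => ENNReal.ofReal (F x).re,
    isProbabilityMeasure_withDensity_ofReal hFint.re hre mass, fun k hk => ?_⟩
  rw [integral_fourier_neg_withDensity_ofReal (by fun_prop) hre, fourierCoeff_ofReal_re hFint,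
    fourierCoeff_natCast_of_hasSum hF, fourierCoeff_neg_natCast_of_hasSum hF hk, map_zero, add_zero]

lemma norm_mul_mul_sub_le_of_hasSum_fourier {b : ℕ → ℂ} {F : C(AddCircle T, ℂ)}
    (hF : HasSum (fun k : ℕ => b k • fourier (k : ℤ)) F) (hb0 : (b 0).re = 1)
    (hre : ∀ x, 0 ≤ (F x).re) (κ : ℂ) {s t : ℕ} (hs : s ≠ 0) (ht : t ≠ 0) :
    ‖κ * b s * b t - b (s + t)‖ ≤ 2 * max 1 ‖2 * κ - 1‖ := by
  obtain ⟨μ, _, hμ⟩ := exists_isProbabilityMeasure_integral_fourier_neg_eq hF hb0 hre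
  have memLp (n : ℤ) : MemLp (fourier (T := T) n) 2 μ :=
    (fourier n).continuous.memLp_of_hasCompactSupport (HasCompactSupport.of_compactSpace _)
  have norm_le_one (n : ℤ) : (eLpNorm (fourier (T := T) n) 2 μ).toReal ≤ 1 :=
    toReal_eLpNorm_le_one_of_norm_le_one (fun x => (Circle.norm_coe (toCircle (n • x))).le) 2
  have bound := norm_integral_mul_sub_mul_integral_mul_integral_le
    (memLp (-s)) (memLp (-t)) (2 * κ)
  simp_rw [← fourier_add, ← neg_add, ← Nat.cast_add] at bound
  rw [hμ s hs, hμ t ht, hμ (s + t) (by omega), norm_sub_rev 1] at bound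
  calc ‖κ * b s * b t - b (s + t)‖
      = 2 * ‖b (s + t) / 2 - 2 * κ * (b s / 2) * (b t / 2)‖ := by
        rw [norm_sub_rev, ← Complex.norm_two, ← norm_mul]
        ring_nf
    _ ≤ 2 * (max 1 ‖2 * κ - 1‖ * 1 * 1) := by
        grw [bound, norm_le_one, norm_le_one]
    _ = 2 * max 1 ‖2 * κ - 1‖ := by ring

lemma exists_hasSum_fourier_of_hasSum_pow {c : ℕ → ℂ} {p : ℂ → ℂ} {r : ℝ} (hr : 0 ≤ r)
    (hp : ∀ z, ‖z‖ = r → HasSum (fun k => c k * z ^ k) (p z)) :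
    ∃ F : C(AddCircle T, ℂ), HasSum (fun k : ℕ => (c k * r ^ k) • fourier (k : ℤ)) F ∧
      ∀ x, F x = p (r * toCircle x) := by
  have norm_r : ‖(r : ℂ)‖ = r := by rw [Complex.norm_real, Real.norm_of_nonneg hr]
  have summable : Summable fun k : ℕ => (c k * r ^ k) • fourier (T := T) k := by
    refine .of_norm ?_
    simpa only [norm_smul, fourier_norm, mul_one] using (hp r norm_r).summable.norm
  refine ⟨_, summable.hasSum, fun x => (ContinuousMap.hasSum_apply summable.hasSum x).unique ?_⟩
  convert hp (r * toCircle x) (by rw [norm_mul, norm_r, Circle.norm_coe, mul_one]) using 2 with k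
  rw [ContinuousMap.smul_apply, fourier_apply, natCast_zsmul, toCircle_nsmul, Circle.coe_pow,
    smul_eq_mul, mul_assoc, mul_pow]

end Fourier

section UnitDisc

variable {c : ℕ → ℂ} {p : ℂ → ℂ} {s t : ℕ}

lemma norm_mul_mul_sub_le_of_re_nonneg
    (hp : ∀ z ∈ Metric.ball (0 : ℂ) 1, z ≠ 0 → HasSum (fun k => c k * z ^ k) (p z))
    (hc0 : (c 0).re = 1) (hre : ∀ z ∈ Metric.ball (0 : ℂ) 1, z ≠ 0 → 0 ≤ (p z).re)
    (κ : ℂ) (hs : s ≠ 0) (ht : t ≠ 0) :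
    ‖κ * c s * c t - c (s + t)‖ ≤ 2 * max 1 ‖2 * κ - 1‖ := by
  have bound_radius (r : ℝ) (hr : r ∈ Set.Ioo 0 1) :
      ‖κ * (c s * r ^ s) * (c t * r ^ t) - c (s + t) * r ^ (s + t)‖ ≤ 2 * max 1 ‖2 * κ - 1‖ := by
    have mem_ball {z : ℂ} (hz : ‖z‖ = r) : z ∈ Metric.ball 0 1 :=
      mem_ball_zero_iff.2 (hz.trans_lt hr.2)
    have ne_zero {z : ℂ} (hz : ‖z‖ = r) : z ≠ 0 := norm_pos_iff.1 (hz.symm ▸ hr.1)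
    obtain ⟨F, hF, hFp⟩ := exists_hasSum_fourier_of_hasSum_pow (T := 1) hr.1.le
      fun z hz => hp z (mem_ball hz) (ne_zero hz)
    refine norm_mul_mul_sub_le_of_hasSum_fourier hF (by simpa using hc0) (fun x => ?_) κ hs ht
    have norm_eq : ‖(r * toCircle x : ℂ)‖ = r := by
      rw [norm_mul, Circle.norm_coe, mul_one, Complex.norm_real, Real.norm_of_nonneg hr.1.le]
    exact hFp x ▸ hre _ (mem_ball norm_eq) (ne_zero norm_eq)
  have continuous_norm : Continuous fun r : ℝ =>
      ‖κ * (c s * r ^ s) * (c t * r ^ t) - c (s + t) * r ^ (s + t)‖ := by fun_prop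
  refine le_of_tendsto ((continuous_norm.tendsto' 1 _ (by simp)).mono_left
    (nhdsWithin_le_nhds (s := Set.Iio 1))) ?_
  filter_upwards [Ioo_mem_nhdsLT zero_lt_one] using bound_radius

lemma norm_mul_mul_sub_le_of_le_re {β : ℝ} (hβ : β < 1)
    (hp : ∀ z ∈ Metric.ball (0 : ℂ) 1, z ≠ 0 → HasSum (fun k => c k * z ^ k) (p z))
    (hc0 : (c 0).re = 1) (hre : ∀ z ∈ Metric.ball (0 : ℂ) 1, z ≠ 0 → β ≤ (p z).re)
    (κ : ℂ) (hs : s ≠ 0) (ht : t ≠ 0) :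
    ‖κ * c s * c t - c (s + t)‖ ≤ 2 * (1 - β) * max 1 ‖2 * κ * (1 - β) - 1‖ := by
  set γ : ℝ := 1 - β with hγ
  have γ_pos : 0 < γ := sub_pos.2 hβ
  have γ_ne : (γ : ℂ) ≠ 0 := Complex.ofReal_ne_zero.2 γ_pos.ne'
  let c' : ℕ → ℂ := fun k => (c k - if k = 0 then (β : ℂ) else 0) / γ
  have c_eq {k : ℕ} (hk : k ≠ 0) : c k = γ * c' k := by
    simp only [c', if_neg hk, sub_zero, mul_div_cancel₀ _ γ_ne]
  have hasSum_c' (z : ℂ) (hz : z ∈ Metric.ball 0 1) (hz0 : z ≠ 0) :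
      HasSum (fun k => c' k * z ^ k) ((p z - β) / γ) := by
    convert! ((hp z hz hz0).sub (hasSum_ite_eq 0 (β : ℂ))).div_const (γ : ℂ) using 2 with k
    rcases eq_or_ne k 0 with rfl | hk
    · simp [c']
    · simp only [c', if_neg hk, sub_zero, div_mul_eq_mul_div]
  have re_c'_zero : (c' 0).re = 1 := by
    simp only [c', if_true, Complex.div_ofReal_re, Complex.sub_re, Complex.ofReal_re, hc0, ← hγ,
      div_self γ_pos.ne']
  have re_nonneg (z : ℂ) (hz : z ∈ Metric.ball 0 1) (hz0 : z ≠ 0) : 0 ≤ ((p z - β) / γ).re := by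
    rw [Complex.div_ofReal_re, Complex.sub_re, Complex.ofReal_re]
    exact div_nonneg (sub_nonneg.2 (hre z hz hz0)) γ_pos.le
  calc ‖κ * c s * c t - c (s + t)‖
      = ‖γ * (κ * γ * c' s * c' t - c' (s + t))‖ := by
        rw [c_eq hs, c_eq ht, c_eq (by omega : s + t ≠ 0)]
        ring_nf
    _ = γ * ‖κ * γ * c' s * c' t - c' (s + t)‖ := by
        rw [norm_mul, Complex.norm_of_nonneg γ_pos.le]
    _ ≤ γ * (2 * max 1 ‖2 * (κ * γ) - 1‖) := by
        gcongr
        exact norm_mul_mul_sub_le_of_re_nonneg hasSum_c' re_c'_zero re_nonneg _ hs ht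
    _ = 2 * γ * max 1 ‖2 * κ * (1 - β) - 1‖ := by
        rw [hγ]
        push_cast
        ring_nf

end UnitDisc

lemma abs_two_mul_mul_sub_one_le_one_iff {K : Type*} [Field K] [LinearOrder K]
    [IsStrictOrderedRing K] {x γ : K} (hγ : 0 < γ) :
    |2 * x * γ - 1| ≤ 1 ↔ 0 ≤ x ∧ x ≤ 1 / γ := by
  rw [abs_le, le_div_iff₀ hγ, ← mul_nonneg_iff_of_pos_right hγ (b := x)]
  constructor <;> rintro ⟨_, _⟩ <;> constructor <;> linarith

theorem generalized_zalcman_re_f_div_z_general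
    {β : ℝ} (hβ : β < 1) {f : ℂ → ℂ} {a : ℕ → ℂ} (ha0 : a 0 = 0) (ha1 : a 1 = 1)
    (hf : ∀ z ∈ Metric.ball (0 : ℂ) 1, HasSum (fun k => a k * z ^ k) (f z))
    (hre : ∀ z ∈ Metric.ball (0 : ℂ) 1, z ≠ 0 → β ≤ (f z / z).re)
    (lam : ℂ) {n m : ℕ} (hn : 2 ≤ n) (hm : 2 ≤ m) :
    ‖lam * a n * a m - a (n + m - 1)‖ ≤ 2 * (1 - β) * max 1 ‖2 * lam * (1 - β) - 1‖ := by
  obtain ⟨s, rfl⟩ := Nat.exists_eq_add_of_le' (one_le_two.trans hn)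
  obtain ⟨t, rfl⟩ := Nat.exists_eq_add_of_le' (one_le_two.trans hm)
  have hasSum_div (z : ℂ) (hz : z ∈ Metric.ball 0 1) (hz0 : z ≠ 0) :
      HasSum (fun k => a (k + 1) * z ^ k) (f z / z) := by
    have tail : HasSum (fun k => a (k + 1) * z ^ (k + 1)) (f z) := by
      simpa [ha0] using (hasSum_nat_add_iff' 1).2 (hf z hz)
    convert! tail.div_const z using 2 with k
    rw [pow_succ, ← mul_assoc, mul_div_cancel_right₀ _ hz0]
  have index_eq : s + 1 + (t + 1) - 1 = s + t + 1 := by omega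
  rw [index_eq]
  exact norm_mul_mul_sub_le_of_le_re (c := fun k => a (k + 1)) hβ hasSum_div (by simp [ha1]) hre lam
    (by omega) (by omega)

theorem generalized_zalcman_re_f_div_z
    (β : ℝ) (hβ : β < 1) (f : ℂ → ℂ) (a : ℕ → ℂ)
    (ha0 : a 0 = 0) (ha1 : a 1 = 1)
    (hf : ∀ z ∈ Metric.ball (0 : ℂ) 1, HasSum (fun k => a k * z ^ k) (f z))
    (hre : ∀ z ∈ Metric.ball (0 : ℂ) 1, z ≠ 0 → β < (f z / z).re)
    (lam : ℝ) (n m : ℕ) (hn : 2 ≤ n) (hm : 2 ≤ m) :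
    (0 ≤ lam ∧ lam ≤ 1 / (1 - β) →
      ‖(lam : ℂ) * a n * a m - a (n + m - 1)‖ ≤ 2 * (1 - β)) ∧
    (lam < 0 ∨ 1 / (1 - β) < lam →
      ‖(lam : ℂ) * a n * a m - a (n + m - 1)‖ ≤ 2 * (1 - β) * |2 * lam * (1 - β) - 1|) := by
  have bound := generalized_zalcman_re_f_div_z_general hβ ha0 ha1 hf
    (fun z hz hz0 => (hre z hz hz0).le) lam hn hm
  have norm_eq : ‖2 * (lam : ℂ) * (1 - β) - 1‖ = |2 * lam * (1 - β) - 1| := by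
    rw [← Real.norm_eq_abs, ← Complex.norm_real]
    push_cast
    rfl
  rw [norm_eq] at bound
  have abs_le_one_iff := abs_two_mul_mul_sub_one_le_one_iff (x := lam) (sub_pos.2 hβ)
  constructor <;> intro hlam
  · rwa [max_eq_left (abs_le_one_iff.2 hlam), mul_one] at bound
  · have one_lt : 1 < |2 * lam * (1 - β) - 1| := by
      rwa [← not_le, abs_le_one_iff, not_and_or, not_le, not_le]
    rwa [max_eq_right one_lt.le] at bound
end

section
/- Let f(z) = z + Σ_{n≥2} a_n zⁿ be a typically real function on the open unit disc 𝔻 and let λ ≥ 1 be a real number. For all integers n, m ≥ 2, except in the cases where (n = 2 and m is even) or (m = 2 and n is even), one has |λ a_n a_m − a_{n+m−1}| ≤ λnm − n − m + 1. -/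
/-!
Robertson's theorem represents the coefficients of a typically real function as
`a (n + 1) = ∫ Uₙ dμ` for a probability measure `μ` on `[-1, 1]`, where `Uₙ` is the Chebyshev
polynomial of the second kind. On the circle of radius `r < 1`, the measure has density
proportional to `sin θ * Im f (r e^{iθ})` in the variable `t = cos θ`, because
`Uₙ (cos θ) * sin θ = sin ((n + 1) θ)`; weak compactness then gives the case `r = 1`.

The moments `∫ Tₙ dμ` satisfy Livingston's inequality `|2 ∫ Tₘ ∫ Tₙ - ∫ Tₘ₊ₙ| ≤ 1`. Since
`Uₙ₊₂ = Uₙ + 2 Tₙ₊₂`, it carries the bound `|∫ Uₚ ∫ U_q - ∫ Uₚ₊q| ≤ p q` from `p` to `p + 2`, so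
only the base cases `p = 0` and `p = q = 3` have to be checked. The bound fails when `p = 1` and `q`
is odd, which accounts for the excluded pairs.
-/

open Real Set Filter Topology MeasureTheory Polynomial.Chebyshev

section LivingstonInequality

variable {Ω : Type*} {mΩ : MeasurableSpace Ω} {μ : Measure Ω} {X Y : Ω → ℝ}

lemma integrable_cos_comp [IsFiniteMeasure μ] (hX : AEMeasurable X μ) :
    Integrable (fun ω ↦ cos (X ω)) μ :=
  .of_bound (continuous_cos.measurable.comp_aemeasurable hX).aestronglyMeasurable 1
    (.of_forall fun ω ↦ abs_cos_le_one (X ω))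

lemma sq_integral_le_integral_sq [IsProbabilityMeasure μ] (hX : MemLp X 2 μ) :
    (∫ ω, X ω ∂μ) ^ 2 ≤ ∫ ω, X ω ^ 2 ∂μ := by
  have hvar := ProbabilityTheory.variance_nonneg X μ
  rw [ProbabilityTheory.variance_eq_sub hX] at hvar
  exact sub_nonneg.mp hvar

lemma sq_cos_sub_cos_le (x y : ℝ) : (cos x - cos y) ^ 2 ≤ 2 - 2 * cos (x + y) := by
  have hsq : 2 - 2 * cos (x + y) = (cos x - cos y) ^ 2 + (sin x + sin y) ^ 2 := by
    rw [cos_add]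
    linear_combination -sin_sq_add_cos_sq x - sin_sq_add_cos_sq y
  linarith [sq_nonneg (sin x + sin y)]

variable [IsProbabilityMeasure μ]

lemma sq_integral_cos_sub_integral_cos_le (hX : AEMeasurable X μ) (hY : AEMeasurable Y μ) :
    (∫ ω, cos (X ω) ∂μ - ∫ ω, cos (Y ω) ∂μ) ^ 2 ≤ 2 - 2 * ∫ ω, cos (X ω + Y ω) ∂μ := by
  have hcosX := integrable_cos_comp hX
  have hcosY := integrable_cos_comp hY
  have hcosXY : Integrable (fun ω ↦ cos (X ω + Y ω)) μ := integrable_cos_comp (hX.add hY)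
  have hdiff : MemLp (fun ω ↦ cos (X ω) - cos (Y ω)) 2 μ :=
    .of_bound (hcosX.sub hcosY).aestronglyMeasurable 2 <| .of_forall fun ω ↦ by
      rw [Real.norm_eq_abs, abs_le]
      constructor <;>
        linarith [neg_one_le_cos (X ω), cos_le_one (X ω), neg_one_le_cos (Y ω), cos_le_one (Y ω)]
  calc (∫ ω, cos (X ω) ∂μ - ∫ ω, cos (Y ω) ∂μ) ^ 2
      = (∫ ω, (cos (X ω) - cos (Y ω)) ∂μ) ^ 2 := by rw [integral_sub hcosX hcosY]
    _ ≤ ∫ ω, (cos (X ω) - cos (Y ω)) ^ 2 ∂μ := sq_integral_le_integral_sq hdiff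
    _ ≤ ∫ ω, (2 - 2 * cos (X ω + Y ω)) ∂μ :=
      integral_mono hdiff.integrable_sq ((integrable_const 2).sub (hcosXY.const_mul 2))
        fun ω ↦ sq_cos_sub_cos_le (X ω) (Y ω)
    _ = 2 - 2 * ∫ ω, cos (X ω + Y ω) ∂μ := by
      rw [integral_sub (integrable_const 2) (hcosXY.const_mul 2), integral_const_mul]
      simp

theorem abs_two_mul_integral_cos_mul_integral_cos_sub_le_one
    (hX : AEMeasurable X μ) (hY : AEMeasurable Y μ) :
    |2 * (∫ ω, cos (X ω) ∂μ) * (∫ ω, cos (Y ω) ∂μ) - ∫ ω, cos (X ω + Y ω) ∂μ| ≤ 1 := by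
  have hupper := sq_integral_cos_sub_integral_cos_le hX hY
  -- The shift by `π` flips the signs of both `cos Y` and `cos (X + Y)`.
  have hlower := sq_integral_cos_sub_integral_cos_le hX (hY.add_const π)
  simp only [← add_assoc, cos_add_pi, integral_neg] at hlower
  rw [abs_le]
  constructor <;>
    nlinarith [sq_nonneg (∫ ω, cos (X ω) ∂μ + ∫ ω, cos (Y ω) ∂μ),
      sq_nonneg (∫ ω, cos (X ω) ∂μ - ∫ ω, cos (Y ω) ∂μ)]

end LivingstonInequality

section ChebyshevMoments

/-- The moment `∫ Tₙ dμ` of a measure on `[-1, 1]` against the Chebyshev polynomial of the first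
kind. Integer indices are allowed, as in Mathlib. -/
noncomputable def chebyshevTMoment (μ : Measure (Icc (-1 : ℝ) 1)) (n : ℤ) : ℝ :=
  ∫ t, (T ℝ n).eval (t : ℝ) ∂μ

/-- The moment `∫ Uₙ dμ` of a measure on `[-1, 1]` against the Chebyshev polynomial of the second
kind. The index `-1`, where the moment vanishes, is the natural start of the recurrence in steps
of two along the odd integers. -/
noncomputable def chebyshevUMoment (μ : Measure (Icc (-1 : ℝ) 1)) (n : ℤ) : ℝ :=
  ∫ t, (U ℝ n).eval (t : ℝ) ∂μ

variable (μ : Measure (Icc (-1 : ℝ) 1))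

lemma chebyshevTMoment_neg (n : ℤ) : chebyshevTMoment μ (-n) = chebyshevTMoment μ n := by
  simp only [chebyshevTMoment, T_neg]

lemma chebyshevUMoment_neg_one : chebyshevUMoment μ (-1) = 0 := by
  simp [chebyshevUMoment]

lemma integrable_eval_polynomial [IsFiniteMeasure μ] (P : Polynomial ℝ) :
    Integrable (fun t : Icc (-1 : ℝ) 1 ↦ P.eval (t : ℝ)) μ :=
  (P.continuous.comp continuous_subtype_val).integrable_of_hasCompactSupport (.of_compactSpace _)

lemma chebyshevUMoment_add_two [IsFiniteMeasure μ] (n : ℤ) :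
    chebyshevUMoment μ (n + 2) = chebyshevUMoment μ n + 2 * chebyshevTMoment μ (n + 2) := by
  simp only [chebyshevUMoment, chebyshevTMoment]
  rw [← integral_const_mul, ← integral_add (integrable_eval_polynomial μ _)
    ((integrable_eval_polynomial μ _).const_mul 2)]
  refine integral_congr_ae (.of_forall fun t ↦ ?_)
  simp only [U_eq_two_mul_T_add_U ℝ n, Polynomial.eval_add, Polynomial.eval_mul,
    Polynomial.eval_ofNat, add_comm]

variable [IsProbabilityMeasure μ]

lemma chebyshevUMoment_zero : chebyshevUMoment μ 0 = 1 := by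
  simp [chebyshevUMoment]

lemma abs_chebyshevTMoment_le_one (n : ℤ) : |chebyshevTMoment μ n| ≤ 1 := by
  have hbound := norm_integral_le_of_norm_le_const (μ := μ) (f := fun t ↦ (T ℝ n).eval (t : ℝ))
    (.of_forall fun t ↦ abs_eval_T_real_le_one n (abs_le.mpr t.2))
  simpa [chebyshevTMoment] using hbound

lemma abs_chebyshevUMoment_sub_one_le (n : ℕ) : |chebyshevUMoment μ (n - 1)| ≤ n := by
  induction n using Nat.twoStepInduction with
  | zero => simp [chebyshevUMoment_neg_one]
  | one => simp [chebyshevUMoment_zero]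
  | more n ih _ =>
    have hrec := chebyshevUMoment_add_two μ (n - 1)
    have hT := abs_chebyshevTMoment_le_one μ (n - 1 + 2)
    rw [show ((n + 2 : ℕ) : ℤ) - 1 = n - 1 + 2 by push_cast; ring, hrec]
    rw [abs_le] at ih hT ⊢
    push_cast
    constructor <;> linarith

lemma abs_chebyshevUMoment_le (n : ℕ) : |chebyshevUMoment μ n| ≤ n + 1 := by
  simpa using abs_chebyshevUMoment_sub_one_le μ (n + 1)

lemma abs_two_mul_chebyshevTMoment_mul_sub_le_one (m n : ℤ) :
    |2 * chebyshevTMoment μ m * chebyshevTMoment μ n - chebyshevTMoment μ (m + n)| ≤ 1 := by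
  have hT (k : ℤ) : chebyshevTMoment μ k = ∫ t : Icc (-1 : ℝ) 1, cos (k * arccos t) ∂μ :=
    integral_congr_ae <| .of_forall fun t ↦ by
      beta_reduce
      rw [← T_real_cos, cos_arccos t.2.1 t.2.2]
  have hangle (k : ℤ) : AEMeasurable (fun t : Icc (-1 : ℝ) 1 ↦ k * arccos (t : ℝ)) μ := by
    fun_prop
  simpa only [hT, Int.cast_add, add_mul] using
    abs_two_mul_integral_cos_mul_integral_cos_sub_le_one (hangle m) (hangle n)

end ChebyshevMoments

section ZalcmanInequality

/-- The sharp Zalcman-type bound `|uₚ u_q - uₚ₊q| ≤ p q` for the moments `uₙ = ∫ Uₙ dμ`. With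
`uₙ = aₙ₊₁`, the coefficient indices of the Zalcman functional are `p + 1` and `q + 1`. -/
def ZalcmanBound (μ : Measure (Icc (-1 : ℝ) 1)) (p q : ℕ) : Prop :=
  |chebyshevUMoment μ p * chebyshevUMoment μ q - chebyshevUMoment μ (p + q)| ≤ p * q

variable {μ : Measure (Icc (-1 : ℝ) 1)} {p q : ℕ}

lemma ZalcmanBound.symm (h : ZalcmanBound μ p q) : ZalcmanBound μ q p := by
  unfold ZalcmanBound at h ⊢
  rwa [mul_comm (chebyshevUMoment μ q), add_comm (q : ℤ), mul_comm (q : ℝ)]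

variable [IsProbabilityMeasure μ]

lemma zalcmanBound_zero_left : ZalcmanBound μ 0 q := by
  simp [ZalcmanBound, chebyshevUMoment_zero]

lemma ZalcmanBound.add_two_left (h : ZalcmanBound μ p q) : ZalcmanBound μ (p + 2) q := by
  obtain rfl | hq := q.eq_zero_or_pos
  · exact zalcmanBound_zero_left.symm
  unfold ZalcmanBound at h ⊢
  push_cast
  set u := chebyshevUMoment μ
  set c := chebyshevTMoment μ
  have hu (n : ℤ) : u (n + 2) = u n + 2 * c (n + 2) := chebyshevUMoment_add_two μ n
  have huq : u q = u (q - 2) + 2 * c q := by simpa using hu (q - 2)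
  have huq_le : |u (q - 2)| ≤ q - 1 := by
    obtain ⟨k, rfl⟩ := Nat.exists_eq_add_of_le' hq
    simpa [show ((k : ℤ) + 1 - 2) = k - 1 by ring] using abs_chebyshevUMoment_sub_one_le μ k
  have hupq : u (p + 2 + q) = u (p + q) + 2 * c (p + 2 + q) := by
    simpa only [add_right_comm] using hu (p + q)
  have hliv : |2 * c (p + 2) * c q - c (p + 2 + q)| ≤ 1 :=
    abs_two_mul_chebyshevTMoment_mul_sub_le_one μ (p + 2) q
  have hcu : |c (p + 2) * u (q - 2)| ≤ q - 1 := by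
    rw [abs_mul]
    exact (mul_le_of_le_one_left (abs_nonneg _) (abs_chebyshevTMoment_le_one μ _)).trans huq_le
  have hsplit : u (p + 2) * u q - u (p + 2 + q) = (u p * u q - u (p + q))
      + 2 * (2 * c (p + 2) * c q - c (p + 2 + q)) + 2 * (c (p + 2) * u (q - 2)) := by
    rw [hupq, hu p]
    linear_combination 2 * c (p + 2) * huq
  rw [hsplit]
  rw [abs_le] at h hliv hcu ⊢
  constructor <;> linarith

lemma ZalcmanBound.add_two_mul_left (h : ZalcmanBound μ p q) (k : ℕ) :
    ZalcmanBound μ (p + 2 * k) q := by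
  induction k with
  | zero => exact h
  | succ k ih => exact ih.add_two_left

lemma zalcmanBound_of_even_left (hp : Even p) : ZalcmanBound μ p q := by
  obtain ⟨k, rfl⟩ := even_iff_exists_two_mul.mp hp
  simpa using (zalcmanBound_zero_left (q := q)).add_two_mul_left k

lemma zalcmanBound_three_three : ZalcmanBound μ 3 3 := by
  set u := chebyshevUMoment μ
  set c := chebyshevTMoment μ
  have hu (n : ℤ) : u (n + 2) = u n + 2 * c (n + 2) := chebyshevUMoment_add_two μ n
  have hu1 : u 1 = 2 * c 1 := by simpa [u, chebyshevUMoment_neg_one] using hu (-1)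
  have hu3 : u 3 = u 1 + 2 * c 3 := hu 1
  have hu2 : u 2 = 1 + 2 * c 2 := by simpa [u, chebyshevUMoment_zero] using hu 0
  have hu4 : u 4 = u 2 + 2 * c 4 := hu 2
  have hu6 : u 6 = u 4 + 2 * c 6 := hu 4
  have hliv₂ : |2 * c 3 * c 1 - c 2| ≤ 1 := by
    simpa [chebyshevTMoment_neg] using abs_two_mul_chebyshevTMoment_mul_sub_le_one μ 3 (-1)
  have hliv₄ : |2 * c 3 * c 1 - c 4| ≤ 1 := abs_two_mul_chebyshevTMoment_mul_sub_le_one μ 3 1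
  have hliv₆ : |2 * c 3 * c 3 - c 6| ≤ 1 := abs_two_mul_chebyshevTMoment_mul_sub_le_one μ 3 3
  have hc1 : c 1 ^ 2 ≤ 1 := (sq_le_one_iff_abs_le_one _).mpr (abs_chebyshevTMoment_le_one μ 1)
  have hsplit : u 3 * u 3 - u 6 = (4 * c 1 ^ 2 - 1) + 2 * (2 * c 3 * c 1 - c 2)
      + 2 * (2 * c 3 * c 1 - c 4) + 2 * (2 * c 3 * c 3 - c 6) := by
    rw [hu3, hu1, hu6, hu4, hu2]
    ring
  change |u 3 * u 3 - u 6| ≤ (3 : ℕ) * (3 : ℕ)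
  rw [hsplit]
  rw [abs_le] at hliv₂ hliv₄ hliv₆ ⊢
  push_cast
  constructor <;> linarith [sq_nonneg (c 1)]

theorem zalcmanBound_of_not_one_odd (hexc : ¬((p = 1 ∧ Odd q) ∨ (q = 1 ∧ Odd p))) :
    ZalcmanBound μ p q := by
  rcases Nat.even_or_odd p with hp_even | hp_odd
  · exact zalcmanBound_of_even_left hp_even
  rcases Nat.even_or_odd q with hq_even | hq_odd
  · exact (zalcmanBound_of_even_left hq_even).symm
  obtain ⟨i, rfl⟩ : ∃ i, p = 3 + 2 * i := ⟨(p - 3) / 2, by grind⟩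
  obtain ⟨j, rfl⟩ : ∃ j, q = 3 + 2 * j := ⟨(q - 3) / 2, by grind⟩
  exact (zalcmanBound_three_three.add_two_mul_left j).symm.add_two_mul_left i

lemma ZalcmanBound.abs_mul_sub_le (h : ZalcmanBound μ p q) {lam : ℝ} (hlam : 1 ≤ lam) :
    |lam * chebyshevUMoment μ p * chebyshevUMoment μ q - chebyshevUMoment μ (p + q)| ≤
      lam * (p + 1) * (q + 1) - p - q - 1 := by
  set u := chebyshevUMoment μ
  have hprod : |u p * u q| ≤ (p + 1) * (q + 1) := by
    rw [abs_mul]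
    exact mul_le_mul (abs_chebyshevUMoment_le μ p) (abs_chebyshevUMoment_le μ q)
      (abs_nonneg _) (by positivity)
  calc |lam * u p * u q - u (p + q)|
      = |(lam - 1) * (u p * u q) + (u p * u q - u (p + q))| := by ring_nf
    _ ≤ |(lam - 1) * (u p * u q)| + |u p * u q - u (p + q)| := abs_add_le _ _
    _ ≤ (lam - 1) * ((p + 1) * (q + 1)) + p * q := by
      rw [abs_mul, abs_of_nonneg (sub_nonneg.mpr hlam)]
      exact add_le_add (mul_le_mul_of_nonneg_left hprod (sub_nonneg.mpr hlam)) h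
    _ = lam * (p + 1) * (q + 1) - p - q - 1 := by ring

end ZalcmanInequality

section SineSeries

lemma integral_cos_int_mul_zero_pi {k : ℤ} (hk : k ≠ 0) :
    ∫ θ in (0 : ℝ)..π, cos (k * θ) = 0 := by
  rw [intervalIntegral.integral_comp_mul_left cos (Int.cast_ne_zero.mpr hk)]
  simp [sin_int_mul_pi]

lemma integral_sin_nat_mul_sin_nat_zero_pi (j : ℕ) {k : ℕ} (hk : k ≠ 0) :
    ∫ θ in (0 : ℝ)..π, sin (k * θ) * sin (j * θ) = if j = k then π / 2 else 0 := by
  have hprod (θ : ℝ) : sin (k * θ) * sin (j * θ) =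
      1 / 2 * cos ((k - j : ℤ) * θ) - 1 / 2 * cos ((k + j : ℤ) * θ) := by
    push_cast
    rw [sub_mul, add_mul, cos_sub, cos_add]
    ring
  have hint (i : ℤ) : IntervalIntegrable (fun θ ↦ 1 / 2 * cos (i * θ)) volume 0 π :=
    (by fun_prop : Continuous _).intervalIntegrable _ _
  simp_rw [hprod]
  rw [intervalIntegral.integral_sub (hint _) (hint _), intervalIntegral.integral_const_mul,
    intervalIntegral.integral_const_mul, integral_cos_int_mul_zero_pi (by omega : (k + j : ℤ) ≠ 0)]
  split_ifs with hjk
  · simp [hjk, div_eq_inv_mul]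
  · rw [integral_cos_int_mul_zero_pi (by omega : (k - j : ℤ) ≠ 0), mul_zero, sub_zero]

variable {b : ℕ → ℝ} {v : ℝ → ℝ}

lemma norm_mul_sin_le (x y : ℝ) : ‖x * sin y‖ ≤ |x| := by
  rw [norm_mul]
  exact mul_le_of_le_one_right (abs_nonneg x) (abs_sin_le_one y)

lemma continuous_of_hasSum_sin (hb : Summable fun k ↦ |b k|)
    (hv : ∀ θ, HasSum (fun k : ℕ ↦ b k * sin (k * θ)) (v θ)) : Continuous v := by
  have htsum : v = fun θ ↦ ∑' k : ℕ, b k * sin (k * θ) := funext fun θ ↦ (hv θ).tsum_eq.symm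
  rw [htsum]
  exact continuous_tsum (fun k ↦ by fun_prop) hb fun k θ ↦ norm_mul_sin_le _ _

lemma integral_sin_mul_of_hasSum_sin (hb : Summable fun k ↦ |b k|)
    (hv : ∀ θ, HasSum (fun k : ℕ ↦ b k * sin (k * θ)) (v θ)) {k : ℕ} (hk : k ≠ 0) :
    ∫ θ in (0 : ℝ)..π, sin (k * θ) * v θ = π / 2 * b k := by
  have hterm (j : ℕ) : ∫ θ in (0 : ℝ)..π, sin (k * θ) * (b j * sin (j * θ)) =
      if j = k then π / 2 * b k else 0 := by
    simp_rw [mul_left_comm _ (b j)]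
    rw [intervalIntegral.integral_const_mul, integral_sin_nat_mul_sin_nat_zero_pi j hk]
    split_ifs with hjk
    · rw [hjk, mul_comm]
    · exact mul_zero _
  have hsum := intervalIntegral.hasSum_integral_of_dominated_convergence
    (μ := volume) (a := 0) (b := π)
    (F := fun j θ ↦ sin (k * θ) * (b j * sin (j * θ))) (fun j _ ↦ |b j|)
    (fun j ↦ (by fun_prop : Continuous _).aestronglyMeasurable)
    (fun j ↦ .of_forall fun θ _ ↦ by
      rw [norm_mul]
      exact (mul_le_of_le_one_left (norm_nonneg _) (abs_sin_le_one _)).trans (norm_mul_sin_le _ _))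
    (.of_forall fun θ _ ↦ hb) (by simp) (.of_forall fun θ _ ↦ (hv θ).mul_left _)
  simp_rw [hterm] at hsum
  exact hsum.unique (hasSum_ite_eq k _)

lemma pos_of_ne_zero_of_integral_mul_pos {α β : ℝ} {w : ℝ → ℝ} (hαβ : α ≤ β)
    (hv : ContinuousOn v (Ioo α β)) (hne : ∀ θ ∈ Ioo α β, v θ ≠ 0)
    (hw : ∀ θ ∈ Ioo α β, 0 ≤ w θ) (hint : 0 < ∫ θ in α..β, w θ * v θ) :
    ∀ θ ∈ Ioo α β, 0 < v θ := by
  by_contra! ⟨θ₀, hθ₀, hvθ₀⟩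
  have hnonpos : ∀ θ ∈ Ioo α β, v θ ≤ 0 := by
    by_contra! ⟨θ₁, hθ₁, hvθ₁⟩
    obtain ⟨θ, hθ, hvθ⟩ :=
      isPreconnected_Ioo.intermediate_value hθ₀ hθ₁ hv ⟨hvθ₀, hvθ₁.le⟩
    exact hne θ hθ hvθ
  rw [intervalIntegral.integral_of_le hαβ, integral_Ioc_eq_integral_Ioo] at hint
  exact hint.not_ge <| setIntegral_nonpos measurableSet_Ioo fun θ hθ ↦
    mul_nonpos_of_nonneg_of_nonpos (hw θ hθ) (hnonpos θ hθ)

lemma pos_of_hasSum_sin (hb : Summable fun k ↦ |b k|)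
    (hv : ∀ θ, HasSum (fun k : ℕ ↦ b k * sin (k * θ)) (v θ)) (hb1 : 0 < b 1)
    (hne : ∀ θ ∈ Ioo 0 π, v θ ≠ 0) : ∀ θ ∈ Ioo 0 π, 0 < v θ := by
  have hint : ∫ θ in (0 : ℝ)..π, sin θ * v θ = π / 2 * b 1 := by
    simpa using integral_sin_mul_of_hasSum_sin hb hv one_ne_zero
  exact pos_of_ne_zero_of_integral_mul_pos pi_pos.le (continuous_of_hasSum_sin hb hv).continuousOn
    hne (fun θ hθ ↦ (sin_pos_of_mem_Ioo hθ).le) (hint ▸ by positivity)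

end SineSeries

section RobertsonRepresentation

/-- The pushforward to `[-1, 1]` under `θ ↦ cos θ` of the measure on `(0, π)` with density `w`.
Negative values of `w` are truncated to `0`. -/
noncomputable def cosPushforward (w : ℝ → ℝ) : Measure (Icc (-1 : ℝ) 1) :=
  ((volume.restrict (Ioo 0 π)).withDensity fun θ ↦ ENNReal.ofReal (w θ)).map
    fun θ ↦ ⟨cos θ, cos_mem_Icc θ⟩

lemma integral_cosPushforward {w : ℝ → ℝ} (hw : Measurable w) (hw0 : ∀ θ ∈ Ioo 0 π, 0 ≤ w θ)
    {g : Icc (-1 : ℝ) 1 → ℝ} (hg : StronglyMeasurable g) :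
    ∫ t, g t ∂cosPushforward w = ∫ θ in (0 : ℝ)..π, w θ * g ⟨cos θ, cos_mem_Icc θ⟩ := by
  have hcos : Measurable fun θ : ℝ ↦ (⟨cos θ, cos_mem_Icc θ⟩ : Icc (-1 : ℝ) 1) :=
    measurable_cos.subtype_mk
  rw [cosPushforward, integral_map hcos.aemeasurable hg.aestronglyMeasurable,
    integral_withDensity_eq_integral_toReal_smul hw.ennreal_ofReal (by simp),
    intervalIntegral.integral_of_le pi_pos.le, integral_Ioc_eq_integral_Ioo]
  refine setIntegral_congr_fun measurableSet_Ioo fun θ hθ ↦ ?_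
  simp [ENNReal.toReal_ofReal (hw0 θ hθ)]

lemma chebyshevUMoment_cosPushforward_sin_mul {v : ℝ → ℝ} (hv : Measurable v)
    (hv0 : ∀ θ ∈ Ioo 0 π, 0 ≤ v θ) (n : ℤ) :
    chebyshevUMoment (cosPushforward fun θ ↦ sin θ * v θ) n =
      ∫ θ in (0 : ℝ)..π, sin ((n + 1) * θ) * v θ := by
  have hU : StronglyMeasurable fun t : Icc (-1 : ℝ) 1 ↦ (U ℝ n).eval (t : ℝ) :=
    ((U ℝ n).continuous.comp continuous_subtype_val).stronglyMeasurable
  rw [chebyshevUMoment, integral_cosPushforward (by fun_prop)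
    (fun θ hθ ↦ mul_nonneg (sin_pos_of_mem_Ioo hθ).le (hv0 θ hθ)) hU]
  congr 1 with θ
  rw [← U_real_cos]
  ring

lemma exists_chebyshevUMoment_of_hasSum_sin {b : ℕ → ℝ} {v : ℝ → ℝ} (hb : Summable fun k ↦ |b k|)
    (hv : ∀ θ, HasSum (fun k : ℕ ↦ b k * sin (k * θ)) (v θ)) (hb1 : 0 < b 1)
    (hne : ∀ θ ∈ Ioo 0 π, v θ ≠ 0) :
    ∃ μ : ProbabilityMeasure (Icc (-1 : ℝ) 1),
      ∀ n : ℕ, b (n + 1) = b 1 * chebyshevUMoment μ n := by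
  have hvcont := continuous_of_hasSum_sin hb hv
  have hvpos := pos_of_hasSum_sin hb hv hb1 hne
  let μ := cosPushforward fun θ ↦ sin θ * (2 / (π * b 1) * v θ)
  have hμ (n : ℕ) : chebyshevUMoment μ n = b (n + 1) / b 1 := by
    have hcoeff := integral_sin_mul_of_hasSum_sin hb hv n.succ_ne_zero
    have hv0 : ∀ θ ∈ Ioo 0 π, 0 ≤ 2 / (π * b 1) * v θ := fun θ hθ ↦
      mul_nonneg (by positivity) (hvpos θ hθ).le
    simp only [Nat.cast_succ] at hcoeff
    simp_rw [μ, chebyshevUMoment_cosPushforward_sin_mul (by fun_prop) hv0, Int.cast_natCast,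
      mul_left_comm _ (2 / (π * b 1)), intervalIntegral.integral_const_mul, hcoeff]
    field_simp
  have hprob : IsProbabilityMeasure μ := by
    rw [isProbabilityMeasure_iff_real]
    simpa [chebyshevUMoment, hb1.ne'] using hμ 0
  refine ⟨⟨μ, hprob⟩, fun n ↦ ?_⟩
  rw [ProbabilityMeasure.coe_mk, hμ, mul_div_cancel₀ _ hb1.ne']

lemma exists_probabilityMeasure_integral_eq_of_tendsto {E ι γ : Type*} [TopologicalSpace E]
    [CompactSpace E] [T2Space E] [MeasurableSpace E] [BorelSpace E] {l : Filter γ} [l.NeBot]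
    (μs : γ → ProbabilityMeasure E) (g : ι → C(E, ℝ)) (m : ι → ℝ)
    (h : ∀ i, Tendsto (fun x ↦ ∫ t, g i t ∂(μs x : Measure E)) l (𝓝 (m i))) :
    ∃ μ : ProbabilityMeasure E, ∀ i, ∫ t, g i t ∂(μ : Measure E) = m i := by
  let 𝒰 := Ultrafilter.of l
  let μ := (𝒰.map μs).lim
  have hμ : Tendsto μs 𝒰 (𝓝 μ) := (𝒰.map μs).le_nhds_lim
  refine ⟨μ, fun i ↦ tendsto_nhds_unique ?_ ((h i).mono_left (Ultrafilter.of_le l))⟩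
  exact ProbabilityMeasure.tendsto_iff_forall_integral_tendsto.mp hμ
    (BoundedContinuousFunction.mkOfCompact (g i))

variable {f : ℂ → ℂ} {a : ℕ → ℝ}

lemma hasSum_im_circle
    (hf : ∀ z ∈ Metric.ball (0 : ℂ) 1, HasSum (fun k ↦ (a k : ℂ) * z ^ k) (f z))
    {r : ℝ} (hr : |r| < 1) (θ : ℝ) :
    HasSum (fun k : ℕ ↦ a k * r ^ k * sin (k * θ)) (f (r * Complex.exp (θ * Complex.I))).im := by
  have hsum := Complex.hasSum_im (hf (r * Complex.exp (θ * Complex.I))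
    (by simpa [Complex.norm_exp_ofReal_mul_I] using hr))
  convert hsum using 2 with k
  rw [mul_pow, ← Complex.exp_nat_mul,
    show (k : ℂ) * (θ * Complex.I) = ((k * θ : ℝ) : ℂ) * Complex.I by push_cast; ring,
    ← Complex.ofReal_pow, ← mul_assoc, ← Complex.ofReal_mul, Complex.im_ofReal_mul,
    Complex.exp_ofReal_mul_I_im]

lemma exists_chebyshevUMoment_of_radius
    (hf : ∀ z ∈ Metric.ball (0 : ℂ) 1, HasSum (fun k ↦ (a k : ℂ) * z ^ k) (f z))
    (hreal : ∀ z ∈ Metric.ball (0 : ℂ) 1, (f z).im = 0 → z.im = 0) (ha1 : 0 < a 1)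
    {r : ℝ} (hr0 : 0 < r) (hr1 : r < 1) :
    ∃ μ : ProbabilityMeasure (Icc (-1 : ℝ) 1),
      ∀ n : ℕ, a (n + 1) * r ^ n = a 1 * chebyshevUMoment μ n := by
  have hr : |r| < 1 := by rwa [abs_of_pos hr0]
  have hsummable : Summable fun k ↦ |a k * r ^ k| := by
    simpa using (hf r (by simpa using hr)).summable.norm
  have him_ne : ∀ θ ∈ Ioo 0 π, (f (r * Complex.exp (θ * Complex.I))).im ≠ 0 := by
    intro θ hθ him
    have hsin := hreal _ (by simpa [Complex.norm_exp_ofReal_mul_I] using hr) him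
    rw [Complex.im_ofReal_mul, Complex.exp_ofReal_mul_I_im] at hsin
    exact (mul_pos hr0 (sin_pos_of_mem_Ioo hθ)).ne' hsin
  obtain ⟨μ, hμ⟩ := exists_chebyshevUMoment_of_hasSum_sin hsummable (hasSum_im_circle hf hr)
    (by positivity) him_ne
  refine ⟨μ, fun n ↦ mul_right_cancel₀ hr0.ne' ?_⟩
  linear_combination hμ n

theorem exists_chebyshevUMoment_eq_coeff
    (hf : ∀ z ∈ Metric.ball (0 : ℂ) 1, HasSum (fun k ↦ (a k : ℂ) * z ^ k) (f z))
    (hreal : ∀ z ∈ Metric.ball (0 : ℂ) 1, (f z).im = 0 → z.im = 0) (ha1 : 0 < a 1) :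
    ∃ μ : ProbabilityMeasure (Icc (-1 : ℝ) 1),
      ∀ n : ℕ, a (n + 1) = a 1 * chebyshevUMoment μ n := by
  have hradius (r : Ioo (0 : ℝ) 1) := exists_chebyshevUMoment_of_radius hf hreal ha1 r.2.1 r.2.2
  choose μs hμs using hradius
  let l : Filter (Ioo (0 : ℝ) 1) := comap (fun r ↦ (r : ℝ)) (𝓝[<] 1)
  have hl : l.NeBot := comap_coe_neBot_of_le_principal
    (le_principal_iff.mpr (Ioo_mem_nhdsLT zero_lt_one))
  have hr : Tendsto ((↑) : Ioo (0 : ℝ) 1 → ℝ) l (𝓝 1) :=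
    tendsto_comap.mono_right nhdsWithin_le_nhds
  have hlim (n : ℕ) : Tendsto (fun r ↦ chebyshevUMoment (μs r) n) l (𝓝 (a (n + 1) / a 1)) := by
    have hmoment (r : Ioo (0 : ℝ) 1) :
        chebyshevUMoment (μs r) n = a (n + 1) * (r : ℝ) ^ n / a 1 := by
      rw [hμs, mul_div_cancel_left₀ _ ha1.ne']
    simpa [hmoment] using ((hr.pow n).const_mul (a (n + 1))).div_const (a 1)
  obtain ⟨μ, hμ⟩ := exists_probabilityMeasure_integral_eq_of_tendsto μs
    (fun n : ℕ ↦ ⟨fun t ↦ (U ℝ n).eval (t : ℝ), by fun_prop⟩) (fun n ↦ a (n + 1) / a 1) hlim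
  refine ⟨μ, fun n ↦ ?_⟩
  rw [show chebyshevUMoment μ n = a (n + 1) / a 1 from hμ n, mul_div_cancel₀ _ ha1.ne']

end RobertsonRepresentation

theorem zalcman_typically_real_general
    (f : ℂ → ℂ) (a : ℕ → ℝ)
    (ha0 : a 0 = 0) (ha1 : a 1 = 1)
    (hf : ∀ z ∈ Metric.ball (0 : ℂ) 1, HasSum (fun k => (a k : ℂ) * z ^ k) (f z))
    (htr : ∀ z ∈ Metric.ball (0 : ℂ) 1, ((f z).im = 0 ↔ z.im = 0))
    (lam : ℝ) (hlam : 1 ≤ lam) (n m : ℕ) (hn : 2 ≤ n) (hm : 2 ≤ m)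
    (hexc : ¬((n = 2 ∧ Even m) ∨ (m = 2 ∧ Even n))) :
    |lam * a n * a m - a (n + m - 1)| ≤ lam * n * m - n - m + 1 := by
  obtain ⟨μ, hμ⟩ :=
    exists_chebyshevUMoment_eq_coeff hf (fun z hz ↦ (htr z hz).mp) (ha1 ▸ one_pos)
  simp only [ha1, one_mul] at hμ
  obtain ⟨p, rfl⟩ := Nat.exists_eq_add_of_le' (one_le_two.trans hn)
  obtain ⟨q, rfl⟩ := Nat.exists_eq_add_of_le' (one_le_two.trans hm)
  have hbound : ZalcmanBound μ p q := zalcmanBound_of_not_one_odd (by grind)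
  calc |lam * a (p + 1) * a (q + 1) - a (p + 1 + (q + 1) - 1)|
      = |lam * chebyshevUMoment μ p * chebyshevUMoment μ q - chebyshevUMoment μ (p + q)| := by
        rw [show p + 1 + (q + 1) - 1 = p + q + 1 by omega, hμ, hμ, hμ, Nat.cast_add]
    _ ≤ lam * (p + 1) * (q + 1) - p - q - 1 := hbound.abs_mul_sub_le hlam
    _ = lam * (p + 1 : ℕ) * (q + 1 : ℕ) - (p + 1 : ℕ) - (q + 1 : ℕ) + 1 := by
        push_cast
        ring
end

section
/- Let f(z) = z + Σ_{n≥2} a_n zⁿ be a typically real function on the open unit disc 𝔻 and let λ be a real number with λ ≥ 1. Then |λ a_2² − a_3| ≤ 3 when 1 ≤ λ ≤ 3/2, and |λ a_2² − a_3| ≤ 4λ − 3 when λ ≥ 3/2. -/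
/-!
On the circle `|z| = r < 1` the imaginary part of a typically real `f` is the sine series
`∑ aₙ rⁿ sin (nθ)`. It does not vanish on `(0, π)`, so it has constant sign there, and the sign is
positive because `a₁ = 1`. Integrating it against a sine polynomial `∑ cₖ sin (kθ)` that is
nonnegative on `(0, π)` and letting `r → 1` gives `0 ≤ ∑ cₖ aₖ`. The polynomials
`3 sin θ - sin 3θ = 4 sin³ θ` and
`(1 + t²) sin θ - 2t sin 2θ + sin 3θ = sin θ (2 cos θ - t)²` with `t = a₂` yield `a₃ ≤ 3` and
`a₂² ≤ a₃ + 1`, from which the bounds on `λ a₂² - a₃` are linear arithmetic.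
-/

open Filter MeasureTheory Metric Real Set
open scoped Topology

section SineSeries

lemma integral_cos_int_mul_eq_zero {m : ℤ} (hm : m ≠ 0) : ∫ x in (0 : ℝ)..π, cos (m * x) = 0 := by
  rw [intervalIntegral.integral_comp_mul_left cos (Int.cast_ne_zero.2 hm)]
  simp

lemma integral_sin_nat_mul_sin_nat (n : ℕ) {k : ℕ} (hk : k ≠ 0) :
    ∫ x in (0 : ℝ)..π, sin (n * x) * sin (k * x) = if n = k then π / 2 else 0 := by
  have product_to_sum (x : ℝ) : sin (n * x) * sin (k * x) =
      (cos ((n - k : ℤ) * x) - cos ((n + k : ℤ) * x)) / 2 := by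
    push_cast
    rw [sub_mul, add_mul, ← two_mul_sin_mul_sin]
    ring
  simp_rw [product_to_sum]
  rw [intervalIntegral.integral_div, intervalIntegral.integral_sub
    (Continuous.intervalIntegrable (by fun_prop) _ _)
    (Continuous.intervalIntegrable (by fun_prop) _ _),
    integral_cos_int_mul_eq_zero (m := n + k) (by lia), sub_zero]
  split_ifs with hnk
  · simp [hnk]
  · rw [integral_cos_int_mul_eq_zero (by lia), zero_div]

lemma intervalIntegral_nonneg_of_forall_mem_Ioo {g : ℝ → ℝ} {x y : ℝ} (hxy : x ≤ y)
    (hg : ∀ t ∈ Ioo x y, 0 ≤ g t) : 0 ≤ ∫ t in x..y, g t := by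
  rw [intervalIntegral.integral_of_le hxy, integral_Ioc_eq_integral_Ioo]
  exact setIntegral_nonneg measurableSet_Ioo hg

/-- The sum at `θ` of the sine series `∑ bₙ sin (nθ)`, for the coefficient sequence `b`: the
form taken on a circle about `0` by the imaginary part of a power series with real coefficients.
The term `n = 0` is zero, and where the series diverges the value is the junk value `0`. -/
noncomputable def sineSeries (b : ℕ → ℝ) (θ : ℝ) : ℝ :=
  ∑' n, b n * sin (n * θ)

variable {b : ℕ → ℝ}

lemma norm_mul_sin_le_abs (c x : ℝ) : ‖c * sin x‖ ≤ |c| := by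
  rw [norm_mul, norm_eq_abs, norm_eq_abs]
  exact mul_le_of_le_one_right (abs_nonneg c) (abs_sin_le_one x)

lemma hasSum_sineSeries (hb : Summable b) (θ : ℝ) :
    HasSum (fun n => b n * sin (n * θ)) (sineSeries b θ) :=
  (Summable.of_norm_bounded hb.abs fun n => norm_mul_sin_le_abs (b n) (n * θ)).hasSum

lemma continuous_sineSeries (hb : Summable b) : Continuous (sineSeries b) :=
  continuous_tsum (fun n => by fun_prop) hb.abs fun n θ => norm_mul_sin_le_abs (b n) (n * θ)

lemma integral_sineSeries_mul_sin (hb : Summable b) {k : ℕ} (hk : k ≠ 0) :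
    ∫ θ in (0 : ℝ)..π, sineSeries b θ * sin (k * θ) = π / 2 * b k := by
  have termwise : HasSum (fun n => ∫ θ in (0 : ℝ)..π, b n * sin (n * θ) * sin (k * θ))
      (∫ θ in (0 : ℝ)..π, sineSeries b θ * sin (k * θ)) := by
    refine intervalIntegral.hasSum_integral_of_dominated_convergence (fun n _ => |b n|)
      (fun n => Continuous.aestronglyMeasurable (by fun_prop))
      (fun n => .of_forall fun θ _ => ?_) (.of_forall fun _ _ => hb.abs) (by simp)
      (.of_forall fun θ _ => (hasSum_sineSeries hb θ).mul_right _)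
    exact (norm_mul_sin_le_abs _ _).trans (norm_mul_sin_le_abs (b n) (n * θ))
  have term_eq (n : ℕ) : ∫ θ in (0 : ℝ)..π, b n * sin (n * θ) * sin (k * θ) =
      if n = k then π / 2 * b k else 0 := by
    simp_rw [mul_assoc]
    rw [intervalIntegral.integral_const_mul, integral_sin_nat_mul_sin_nat n hk]
    split_ifs with hnk
    · rw [hnk, mul_comm]
    · rw [mul_zero]
  simp_rw [term_eq] at termwise
  exact termwise.unique (hasSum_ite_eq k _)

lemma integral_sineSeries_mul_sum_sin (hb : Summable b) {m : ℕ} (c : Fin m → ℝ) :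
    ∫ θ in (0 : ℝ)..π, sineSeries b θ * ∑ k, c k * sin ((k + 1 : ℕ) * θ) =
      π / 2 * ∑ k, c k * b (k + 1) := by
  have hcont := continuous_sineSeries hb
  simp_rw [Finset.mul_sum, mul_left_comm (sineSeries b _)]
  rw [intervalIntegral.integral_finsetSum fun k _ =>
    Continuous.intervalIntegrable (by fun_prop) _ _]
  refine Finset.sum_congr rfl fun k _ => ?_
  rw [intervalIntegral.integral_const_mul, integral_sineSeries_mul_sin hb k.val.succ_ne_zero,
    mul_left_comm]

lemma sum_mul_nonneg_of_sineSeries_nonneg (hb : Summable b)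
    (hpos : ∀ θ ∈ Ioo 0 π, 0 ≤ sineSeries b θ) {m : ℕ} {c : Fin m → ℝ}
    (hc : ∀ θ ∈ Ioo 0 π, 0 ≤ ∑ k, c k * sin ((k + 1 : ℕ) * θ)) :
    0 ≤ ∑ k, c k * b (k + 1) := by
  have hint := intervalIntegral_nonneg_of_forall_mem_Ioo pi_pos.le
    fun θ hθ => mul_nonneg (hpos θ hθ) (hc θ hθ)
  rw [integral_sineSeries_mul_sum_sin hb] at hint
  exact nonneg_of_mul_nonneg_right hint (by positivity)

lemma sineSeries_pos_of_forall_ne_zero (hb : Summable b) (hb1 : 0 < b 1)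
    (hne : ∀ θ ∈ Ioo 0 π, sineSeries b θ ≠ 0) : ∀ θ ∈ Ioo 0 π, 0 < sineSeries b θ := by
  refine (isPreconnected_Ioo.mapsTo_Ioi_or_Iio (continuous_sineSeries hb).continuousOn
    hne).resolve_right fun hneg => ?_
  have hint : 0 ≤ ∫ θ in (0 : ℝ)..π, -(sineSeries b θ * sin ((1 : ℕ) * θ)) := by
    refine intervalIntegral_nonneg_of_forall_mem_Ioo pi_pos.le fun θ hθ => ?_
    rw [Nat.cast_one, one_mul, Left.nonneg_neg_iff]
    exact mul_nonpos_of_nonpos_of_nonneg (hneg hθ).le (sin_pos_of_mem_Ioo hθ).le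
  rw [intervalIntegral.integral_neg, integral_sineSeries_mul_sin hb one_ne_zero] at hint
  have : 0 < π / 2 * b 1 := by positivity
  linarith

end SineSeries

lemma im_circleMap_zero (r θ : ℝ) : (circleMap 0 r θ).im = r * sin θ := by
  rw [circleMap_zero, Complex.im_ofReal_mul, Complex.exp_ofReal_mul_I_im]

lemma im_eq_sineSeries_of_hasSum {a : ℕ → ℝ} {r θ : ℝ} {w : ℂ}
    (h : HasSum (fun k => (a k : ℂ) * circleMap 0 r θ ^ k) w) :
    w.im = sineSeries (fun k => a k * r ^ k) θ := by
  have term_im (k : ℕ) : ((a k : ℂ) * circleMap 0 r θ ^ k).im = a k * r ^ k * sin (k * θ) := by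
    rw [circleMap_zero_pow, Complex.im_ofReal_mul, im_circleMap_zero, mul_assoc]
  have him := Complex.hasSum_im h
  simp_rw [term_im] at him
  exact him.tsum_eq.symm

/-- `f` is a typically real function on the open unit disc with Taylor coefficients `aₙ` at `0`,
normalised by `a₀ = 0` and `a₁ = 1`. Analyticity is encoded by the convergence of the Taylor series
of `f` on the disc. The coefficients are taken real from the start. -/
structure IsTypicallyReal (f : ℂ → ℂ) (a : ℕ → ℝ) : Prop where
  coeff_zero : a 0 = 0
  coeff_one : a 1 = 1
  hasSum : ∀ z ∈ ball (0 : ℂ) 1, HasSum (fun k => (a k : ℂ) * z ^ k) (f z)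
  im_eq_zero_iff : ∀ z ∈ ball (0 : ℂ) 1, ((f z).im = 0 ↔ z.im = 0)

namespace IsTypicallyReal

variable {f : ℂ → ℂ} {a : ℕ → ℝ} {r : ℝ}

lemma summable_coeff_mul_pow (h : IsTypicallyReal f a) (hr : |r| < 1) :
    Summable fun k => a k * r ^ k := by
  have hsum := (h.hasSum r (by simpa using hr)).summable
  exact_mod_cast hsum

lemma sineSeries_pos (h : IsTypicallyReal f a) (hr0 : 0 < r) (hr1 : r < 1) :
    ∀ θ ∈ Ioo 0 π, 0 < sineSeries (fun k => a k * r ^ k) θ := by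
  have hr : |r| < 1 := by rwa [abs_of_pos hr0]
  refine sineSeries_pos_of_forall_ne_zero (h.summable_coeff_mul_pow hr)
    (by simpa [h.coeff_one] using hr0) fun θ hθ => ?_
  have hmem : circleMap 0 r θ ∈ ball (0 : ℂ) 1 := by simpa using hr
  rw [← im_eq_sineSeries_of_hasSum (h.hasSum _ hmem), ne_eq, h.im_eq_zero_iff _ hmem,
    im_circleMap_zero]
  exact (mul_pos hr0 (sin_pos_of_mem_Ioo hθ)).ne'

lemma sum_mul_coeff_nonneg (h : IsTypicallyReal f a) {m : ℕ} {c : Fin m → ℝ}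
    (hc : ∀ θ ∈ Ioo 0 π, 0 ≤ ∑ k, c k * sin ((k + 1 : ℕ) * θ)) :
    0 ≤ ∑ k, c k * a (k + 1) := by
  have hcont : Continuous fun r : ℝ => ∑ k, c k * (a (k + 1) * r ^ (k + 1 : ℕ)) := by fun_prop
  have hlim : Tendsto (fun r : ℝ => ∑ k, c k * (a (k + 1) * r ^ (k + 1 : ℕ))) (𝓝[<] 1)
      (𝓝 (∑ k, c k * a (k + 1))) := by
    simpa using (hcont.tendsto 1).mono_left nhdsWithin_le_nhds
  refine ge_of_tendsto hlim ?_
  filter_upwards [Ioo_mem_nhdsLT one_pos] with r ⟨hr0, hr1⟩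
  have hsum := h.summable_coeff_mul_pow (by rwa [abs_of_pos hr0])
  exact sum_mul_nonneg_of_sineSeries_nonneg hsum
    (fun θ hθ => (h.sineSeries_pos hr0 hr1 θ hθ).le) hc

lemma add_mul_coeff_two_add_mul_coeff_three_nonneg (h : IsTypicallyReal f a) {p q s : ℝ}
    (hpqs : ∀ θ ∈ Ioo 0 π, 0 ≤ p * sin θ + q * sin (2 * θ) + s * sin (3 * θ)) :
    0 ≤ p + q * a 2 + s * a 3 := by
  have hnonneg := h.sum_mul_coeff_nonneg (c := ![p, q, s]) fun θ hθ => by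
    simpa [Fin.sum_univ_succ, ← add_assoc, one_add_one_eq_two, two_add_one_eq_three]
      using hpqs θ hθ
  simpa [Fin.sum_univ_succ, ← add_assoc, h.coeff_one] using hnonneg

lemma coeff_three_le_three (h : IsTypicallyReal f a) : a 3 ≤ 3 := by
  have hnonneg : 0 ≤ 3 + 0 * a 2 + -1 * a 3 := by
    refine h.add_mul_coeff_two_add_mul_coeff_three_nonneg fun θ hθ => ?_
    have hsin := sin_pos_of_mem_Ioo hθ
    calc
      0 ≤ 4 * sin θ ^ 3 := by positivity
      _ = 3 * sin θ + 0 * sin (2 * θ) + -1 * sin (3 * θ) := by rw [sin_three_mul]; ring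
  linarith

lemma coeff_two_sq_le_coeff_three_add_one (h : IsTypicallyReal f a) : a 2 ^ 2 ≤ a 3 + 1 := by
  have hnonneg : 0 ≤ 1 + a 2 ^ 2 + -2 * a 2 * a 2 + 1 * a 3 := by
    refine h.add_mul_coeff_two_add_mul_coeff_three_nonneg fun θ hθ => ?_
    have hsin := sin_pos_of_mem_Ioo hθ
    calc
      0 ≤ sin θ * (2 * cos θ - a 2) ^ 2 := by positivity
      _ = (1 + a 2 ^ 2) * sin θ + -2 * a 2 * sin (2 * θ) + 1 * sin (3 * θ) := by
        rw [sin_two_mul, sin_three_mul]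
        linear_combination 4 * sin θ * sin_sq_add_cos_sq θ
  linarith

lemma abs_mul_coeff_two_sq_sub_coeff_three_le (h : IsTypicallyReal f a) {lam : ℝ}
    (hlam : 1 ≤ lam) : |lam * a 2 ^ 2 - a 3| ≤ max 3 (4 * lam - 3) := by
  have lower : -3 ≤ lam * a 2 ^ 2 - a 3 := by
    have : 0 ≤ lam * a 2 ^ 2 := by positivity
    linarith [h.coeff_three_le_three]
  have upper : lam * a 2 ^ 2 - a 3 ≤ 4 * lam - 3 :=
    calc
      lam * a 2 ^ 2 - a 3 = (lam - 1) * a 2 ^ 2 + (a 2 ^ 2 - a 3) := by ring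
      _ ≤ (lam - 1) * 4 + 1 := by
        gcongr <;> linarith [h.coeff_three_le_three, h.coeff_two_sq_le_coeff_three_add_one]
      _ = 4 * lam - 3 := by ring
  exact abs_le.2 ⟨(neg_le_neg (le_max_left _ _)).trans lower, upper.trans (le_max_right _ _)⟩

end IsTypicallyReal

theorem zalcman_typically_real_a2_a3
    (f : ℂ → ℂ) (a : ℕ → ℝ)
    (ha0 : a 0 = 0) (ha1 : a 1 = 1)
    (hf : ∀ z ∈ Metric.ball (0 : ℂ) 1, HasSum (fun k => (a k : ℂ) * z ^ k) (f z))
    (htr : ∀ z ∈ Metric.ball (0 : ℂ) 1, ((f z).im = 0 ↔ z.im = 0))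
    (lam : ℝ) (hlam : 1 ≤ lam) :
    (1 ≤ lam ∧ lam ≤ 3 / 2 → |lam * a 2 ^ 2 - a 3| ≤ 3) ∧
    (3 / 2 ≤ lam → |lam * a 2 ^ 2 - a 3| ≤ 4 * lam - 3) := by
  have hbound : |lam * a 2 ^ 2 - a 3| ≤ max 3 (4 * lam - 3) :=
    IsTypicallyReal.abs_mul_coeff_two_sq_sub_coeff_three_le ⟨ha0, ha1, hf, htr⟩ hlam
  exact ⟨fun h => hbound.trans_eq (max_eq_left (by linarith)),
    fun h => hbound.trans_eq (max_eq_right (by linarith))⟩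
end
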